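/- Let S : ℝ^ℕ → ℝ^ℕ be the shift map, S(x)(0) = 0 and S(x)(n) = x(n−1) for n ≥ 1. Then the identity map of ℝ^ℕ is joined to S by the homotopy H(t,x) = (1−t)·x + t·S(x), and for every t ∈ [0,1] the map H(t,·) : ℝ^ℕ → ℝ^ℕ is an injective continuous linear map; in particular, the identity and the shift lie in the same path component of the space of injective continuous linear self-maps of ℝ^ℕ. -/

import Mathlib

/-!
The point is injectivity of `H(t,·) = (1-t)·id + t·S`. For `t = 1` this is the shift. For `t < 1` the
map is lower triangular with the nonzero constant `1 - t` on the diagonal, so the coordinates of `x`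
are recovered from those of `H(t,x)` one after the other (`lineHomotopy_injective`). Joint continuity
of `H` then gives, by currying, a continuous path in the compact-open topology, and that path stays
in the space of injective continuous linear maps.
-/

noncomputable section

/-- The shift map `S : ℝ^ℕ → ℝ^ℕ`, `S(x)(0) = 0` and `S(x)(n) = x(n-1)` for `n ≥ 1`. -/
def shiftSeq : (ℕ → ℝ) → (ℕ → ℝ) := fun x n =>
  match n with
  | 0 => 0
  | Nat.succ m => x m

lemma shiftSeq_continuous : Continuous shiftSeq := by
  apply continuous_pi
  intro n
  cases n with
  | zero => exact continuous_const
  | succ m => exact continuous_apply m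

lemma shiftSeq_injective : Function.Injective shiftSeq := fun x y h =>
  funext fun n => congrFun h (n + 1)

lemma shiftSeq_isLinearMap : IsLinearMap ℝ shiftSeq := by
  constructor
  · intro x y
    funext n
    cases n with
    | zero => show (0 : ℝ) = 0 + 0; simp
    | succ m => rfl
  · intro c x
    funext n
    cases n with
    | zero => show (0 : ℝ) = c • (0 : ℝ); simp
    | succ m => rfl

/-- The space of injective continuous linear self-maps of `ℝ^ℕ`, as a subspace of the
space of continuous self-maps of `ℝ^ℕ`. -/
def InjLinSelfMaps : Type :=
  {f : C((ℕ → ℝ), (ℕ → ℝ)) // Function.Injective f ∧ IsLinearMap ℝ f}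

instance : TopologicalSpace InjLinSelfMaps :=
  inferInstanceAs
    (TopologicalSpace {f : C((ℕ → ℝ), (ℕ → ℝ)) // Function.Injective f ∧ IsLinearMap ℝ f})

/-- The identity, as an injective continuous linear self-map of `ℝ^ℕ`. -/
def idElem : InjLinSelfMaps :=
  ⟨ContinuousMap.id _, fun _ _ h => h, ⟨fun _ _ => rfl, fun _ _ => rfl⟩⟩

/-- The shift, as an injective continuous linear self-map of `ℝ^ℕ`. -/
def shiftElem : InjLinSelfMaps :=
  ⟨⟨shiftSeq, shiftSeq_continuous⟩, shiftSeq_injective, shiftSeq_isLinearMap⟩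

/-- The straight-line homotopy `(t, x) ↦ (1 - t) • x + t • S x` from the identity to the shift. -/
def lineHomotopy : C(unitInterval × (ℕ → ℝ), ℕ → ℝ) where
  toFun p := (1 - (p.1 : ℝ)) • p.2 + (p.1 : ℝ) • shiftSeq p.2
  continuous_toFun := by
    have hS : Continuous fun p : unitInterval × (ℕ → ℝ) => shiftSeq p.2 :=
      shiftSeq_continuous.comp continuous_snd
    fun_prop

lemma lineHomotopy_apply (t : unitInterval) (x : ℕ → ℝ) :
    lineHomotopy (t, x) = (1 - (t : ℝ)) • x + (t : ℝ) • shiftSeq x := rfl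

lemma lineHomotopy_zero (x : ℕ → ℝ) : lineHomotopy (0, x) = x := by
  simp [lineHomotopy_apply]

lemma lineHomotopy_one (x : ℕ → ℝ) : lineHomotopy (1, x) = shiftSeq x := by
  simp [lineHomotopy_apply]

lemma lineHomotopy_isLinearMap (t : unitInterval) :
    IsLinearMap ℝ (fun x => lineHomotopy (t, x)) := by
  constructor
  · intro x y
    simp only [lineHomotopy_apply, shiftSeq_isLinearMap.map_add]
    module
  · intro c x
    simp only [lineHomotopy_apply, shiftSeq_isLinearMap.map_smul]
    module

lemma lineHomotopy_injective (t : unitInterval) :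
    Function.Injective (fun x => lineHomotopy (t, x)) := by
  intro x y h
  by_cases ht : (t : ℝ) = 1
  · obtain rfl : t = 1 := Subtype.ext ht
    simp only [lineHomotopy_one] at h
    exact shiftSeq_injective h
  · have hne : 1 - (t : ℝ) ≠ 0 := sub_ne_zero.mpr (Ne.symm ht)
    have hcoord (n : ℕ) : (1 - (t : ℝ)) * x n + t * shiftSeq x n
        = (1 - (t : ℝ)) * y n + t * shiftSeq y n := congrFun h n
    funext n
    induction n with
    | zero => exact mul_left_cancel₀ hne (by simpa [shiftSeq] using hcoord 0)
    | succ m ih =>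
      have hm : (1 - (t : ℝ)) * x (m + 1) + t * x m
          = (1 - (t : ℝ)) * y (m + 1) + t * y m := hcoord (m + 1)
      rw [ih] at hm
      exact mul_left_cancel₀ hne (add_right_cancel hm)

/-- The path is the curried form of `lineHomotopy`; currying is continuous into the compact-open
topology. -/
lemma joined_idElem_shiftElem : Joined idElem shiftElem :=
  ⟨{ toFun := fun t =>
        ⟨lineHomotopy.curry t, lineHomotopy_injective t, lineHomotopy_isLinearMap t⟩
     continuous_toFun := Continuous.subtype_mk lineHomotopy.curry.continuous _
     source' := Subtype.ext (ContinuousMap.ext lineHomotopy_zero)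
     target' := Subtype.ext (ContinuousMap.ext lineHomotopy_one) }⟩

/-- The identity map of `ℝ^ℕ` is joined to the shift `S` by the continuous homotopy
`H(t,x) = (1-t)·x + t·S(x)`; for every `t ∈ [0,1]` the map `H(t,·)` is an injective
continuous linear map, and in particular the identity and the shift lie in the same path
component of the space of injective continuous linear self-maps of `ℝ^ℕ`. -/
theorem statement14 :
    ∃ H : C(unitInterval × (ℕ → ℝ), ℕ → ℝ),
      (∀ (t : unitInterval) (x : ℕ → ℝ),
        H (t, x) = (1 - (t : ℝ)) • x + (t : ℝ) • shiftSeq x) ∧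
      (∀ x : ℕ → ℝ, H (0, x) = x) ∧
      (∀ x : ℕ → ℝ, H (1, x) = shiftSeq x) ∧
      (∀ t : unitInterval,
        IsLinearMap ℝ (fun x => H (t, x)) ∧
          Function.Injective (fun x => H (t, x)) ∧
          Continuous (fun x => H (t, x))) ∧
      Joined idElem shiftElem := by
  exact ⟨lineHomotopy, lineHomotopy_apply, lineHomotopy_zero, lineHomotopy_one,
    fun t => ⟨lineHomotopy_isLinearMap t, lineHomotopy_injective t, by fun_prop⟩,
    joined_idElem_shiftElem⟩
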